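/- arXiv:math/0111260 — 4 statements merged into one kernel-verified Lean document; each statement's English description precedes it below -/
import Mathlib

section
/- Let W be a ℂ-linear subspace of the field ℂ((t)) of formal Laurent series such that the projection γ_W : W → ℂ((t))/tℂ[[t]] is Fredholm (has finite-dimensional kernel and cokernel). Let f ∈ ℂ((t)) be a nonzero Laurent series of t-adic order v ∈ ℤ. Then the subspace f·W = {f·w : w ∈ W} also has Fredholm projection γ_{f·W}, and ind(γ_{f·W}) = ind(γ_W) + v. In particular, multiplication by t^{-n} lowers the virtual dimension by n. -/
noncomputable section

/-- Shortcut instance to speed up instance search for submodules of `ℂ((t))`. -/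
instance (W : Submodule ℂ (LaurentSeries ℂ)) : AddCommGroup W := inferInstance

/-- Shortcut instance to speed up instance search for submodules of `ℂ((t))`. -/
instance (W : Submodule ℂ (LaurentSeries ℂ)) : Module ℂ W := inferInstance

/-- The ℂ-subspace `t·ℂ[[t]]` of the field `ℂ((t))` of formal Laurent series:
the series whose coefficients vanish in all degrees `≤ 0`. -/
def tPosPart : Submodule ℂ (LaurentSeries ℂ) where
  carrier := {f | ∀ m : ℤ, m ≤ 0 → f.coeff m = 0}
  add_mem' := by
    intro a b ha hb m hm
    simp [HahnSeries.coeff_add, ha m hm, hb m hm]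
  zero_mem' := by intro m hm; simp
  smul_mem' := by
    intro c a ha m hm
    simp [HahnSeries.coeff_smul, ha m hm]

/-- Shortcut instance to speed up instance search for `ℂ((t))/tℂ[[t]]`. -/
instance : AddCommGroup (LaurentSeries ℂ ⧸ tPosPart) := inferInstance

/-- Shortcut instance to speed up instance search for `ℂ((t))/tℂ[[t]]`. -/
instance : Module ℂ (LaurentSeries ℂ ⧸ tPosPart) := inferInstance

/-- The projection `γ_W : W → ℂ((t))/tℂ[[t]]`, the composite of the inclusion of `W`
into `ℂ((t))` with the quotient map. -/
def gammaMap (W : Submodule ℂ (LaurentSeries ℂ)) :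
    W →ₗ[ℂ] (LaurentSeries ℂ ⧸ tPosPart) :=
  tPosPart.mkQ.comp W.subtype

/-- `γ_W` is Fredholm: its kernel and cokernel are finite-dimensional over `ℂ`. -/
def IsFredholm (W : Submodule ℂ (LaurentSeries ℂ)) : Prop :=
  FiniteDimensional ℂ (LinearMap.ker (gammaMap W)) ∧
  FiniteDimensional ℂ ((LaurentSeries ℂ ⧸ tPosPart) ⧸ LinearMap.range (gammaMap W))

/-- The index `ind γ_W = dim ker γ_W - dim coker γ_W`, i.e. the virtual dimension of `W`. -/
def ind (W : Submodule ℂ (LaurentSeries ℂ)) : ℤ :=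
  (Module.finrank ℂ (LinearMap.ker (gammaMap W)) : ℤ) -
  (Module.finrank ℂ ((LaurentSeries ℂ ⧸ tPosPart) ⧸ LinearMap.range (gammaMap W)) : ℤ)

/-- Multiplication by the Laurent series `f`, as a ℂ-linear endomorphism of `ℂ((t))`. -/
def mulBy (f : LaurentSeries ℂ) : LaurentSeries ℂ →ₗ[ℂ] LaurentSeries ℂ where
  toFun g := f * g
  map_add' := mul_add f
  map_smul' c g := by
    simp only [RingHom.id_apply, ← HahnSeries.single_zero_mul_eq_smul]
    ring

/-- The Laurent series `t^{-n}`. -/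
def tpowNeg (n : ℕ) : LaurentSeries ℂ := HahnSeries.single (-(n : ℤ)) (1 : ℂ)

/-!
Multiplication by `f` identifies `W → V/A` with `f·W → V/(f·A)`, where `V = ℂ((t))`, so the index
of `γ_{f·W}` is that of the projection of `W` modulo `f⁻¹·tℂ[[t]] = t^{1-v}ℂ[[t]]`. The quotients of
`V` by this subspace and by `tℂ[[t]]` are related by a surjection with `|v|`-dimensional kernel,
whose direction depends on the sign of `v`. Additivity of the index under composition, and the fact
that `T` is Fredholm once `S` and `S ∘ T` are, transfer the index along it in either direction.
-/

section FredholmIndex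

variable {K : Type*} [DivisionRing K]
variable {V V' V'' : Type*} [AddCommGroup V] [AddCommGroup V'] [AddCommGroup V'']
variable [Module K V] [Module K V'] [Module K V'']

theorem finite_coker_of_finite_coker_comp {u : V →ₗ[K] V'} {v : V' →ₗ[K] V''}
    (hv : FiniteDimensional K v.ker) (hvu : FiniteDimensional K (V'' ⧸ (v ∘ₗ u).range)) :
    FiniteDimensional K (V' ⧸ u.range) := by
  have hle : u.range ≤ (v ∘ₗ u).range.comap v := by
    rw [LinearMap.range_comp]
    exact Submodule.le_comap_map v u.range
  -- The kernel of the induced map `coker u → coker (v ∘ u)` is the image of `ker v`.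
  let w : (V' ⧸ u.range) →ₗ[K] V'' ⧸ (v ∘ₗ u).range := u.range.mapQ _ v hle
  have hw : w.ker = v.ker.map u.range.mkQ := by
    simp [w, Submodule.ker_mapQ, LinearMap.range_comp, Submodule.comap_map_eq]
  have : FiniteDimensional K w.ker := by
    rw [hw]
    infer_instance
  have : FiniteDimensional K ((V' ⧸ u.range) ⧸ w.ker) :=
    Module.Finite.equiv w.quotKerEquivRange.symm
  exact Module.Finite.of_submodule_quotient w.ker

/-- A linear map is Fredholm of index `n`: its kernel and cokernel are finite-dimensional, and the
difference of their dimensions is `n`. As `LinearMap.index` takes junk values outside Fredholm maps,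
finiteness is bundled with the value of the index. -/
structure HasFredholmIndex (u : V →ₗ[K] V') (n : ℤ) : Prop where
  finite_ker : FiniteDimensional K u.ker
  finite_coker : FiniteDimensional K (V' ⧸ u.range)
  index_eq : u.index = n

namespace HasFredholmIndex

variable {u : V →ₗ[K] V'} {v : V' →ₗ[K] V''} {m n : ℤ}

theorem comp (hv : HasFredholmIndex v m) (hu : HasFredholmIndex u n) :
    HasFredholmIndex (v ∘ₗ u) (m + n) := by
  have := hu.finite_ker
  have := hu.finite_coker
  have := hv.finite_ker
  have := hv.finite_coker
  refine ⟨?_, ?_, by rw [LinearMap.index_comp, hv.index_eq, hu.index_eq]⟩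
  · rw [LinearMap.ker_comp]
    infer_instance
  · rw [LinearMap.range_comp]
    infer_instance

theorem of_comp (hv : HasFredholmIndex v m) (hvu : HasFredholmIndex (v ∘ₗ u) (m + n)) :
    HasFredholmIndex u n := by
  have := hv.finite_ker
  have := hv.finite_coker
  have := hvu.finite_ker
  have hker : FiniteDimensional K u.ker :=
    Submodule.finiteDimensional_of_le (LinearMap.ker_le_ker_comp u v)
  have hcoker := finite_coker_of_finite_coker_comp hv.finite_ker hvu.finite_coker
  refine ⟨hker, hcoker, ?_⟩
  have hindex := hvu.index_eq
  rw [LinearMap.index_comp, hv.index_eq] at hindex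
  exact add_left_cancel hindex

end HasFredholmIndex

theorem hasFredholmIndex_of_surjective {u : V →ₗ[K] V'} (hu : Function.Surjective u)
    [FiniteDimensional K u.ker] : HasFredholmIndex u (Module.finrank K u.ker) := by
  refine ⟨inferInstance, ?_, LinearMap.index_of_surjective hu⟩
  rw [LinearMap.range_eq_top.mpr hu]
  infer_instance

theorem hasFredholmIndex_linearEquiv (e : V ≃ₗ[K] V') :
    HasFredholmIndex (e : V →ₗ[K] V') 0 := by
  refine ⟨?_, ?_, LinearEquiv.index_eq_zero⟩
  · rw [e.ker]
    infer_instance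
  · rw [e.range]
    infer_instance

theorem hasFredholmIndex_factor {A B : Submodule K V} (h : A ≤ B)
    [FiniteDimensional K (B ⧸ A.submoduleOf B)] :
    HasFredholmIndex (Submodule.factor h) (Module.finrank K (B ⧸ A.submoduleOf B)) := by
  have hker : (A.mkQ ∘ₗ B.subtype).ker = A.submoduleOf B := by
    rw [LinearMap.ker_comp, A.ker_mkQ, Submodule.submoduleOf]
  have hrange : (A.mkQ ∘ₗ B.subtype).range = (Submodule.factor h).ker := by
    simp [Submodule.factor, Submodule.ker_mapQ, LinearMap.range_comp]
  let e : (B ⧸ A.submoduleOf B) ≃ₗ[K] (Submodule.factor h).ker :=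
    Submodule.quotEquivOfEq _ _ hker.symm ≪≫ₗ (A.mkQ ∘ₗ B.subtype).quotKerEquivRange ≪≫ₗ
      LinearEquiv.ofEq _ _ hrange
  have : FiniteDimensional K (Submodule.factor h).ker := Module.Finite.equiv e
  rw [e.finrank_eq]
  exact hasFredholmIndex_of_surjective (Submodule.factor_surjective h)

/-- The projection `W → V/A` of a subspace `W ⊆ V` modulo another subspace `A`, of which `gammaMap`
is the case `A = tℂ[[t]]`. -/
def projMod (A W : Submodule K V) : W →ₗ[K] V ⧸ A :=
  A.mkQ ∘ₗ W.subtype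

theorem factor_comp_projMod {A B : Submodule K V} (h : A ≤ B) (W : Submodule K V) :
    Submodule.factor h ∘ₗ projMod A W = projMod B W := by
  rw [projMod, ← LinearMap.comp_assoc, Submodule.factor_comp_mk, projMod]

theorem HasFredholmIndex.projMod_map {A W : Submodule K V} {n : ℤ}
    (h : HasFredholmIndex (projMod A W) n) (e : V ≃ₗ[K] V') :
    HasFredholmIndex (projMod (A.map (e : V →ₗ[K] V')) (W.map (e : V →ₗ[K] V'))) n := by
  let eQuot := Submodule.Quotient.equiv A _ e rfl
  let eSub := e.submoduleMap W
  have hconj : projMod (A.map (e : V →ₗ[K] V')) (W.map (e : V →ₗ[K] V')) =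
      (eQuot : _ →ₗ[K] _) ∘ₗ projMod A W ∘ₗ (eSub.symm : _ →ₗ[K] W) := by
    rw [← LinearMap.comp_assoc, LinearEquiv.eq_comp_toLinearMap_symm]
    rfl
  rw [hconj]
  simpa using (hasFredholmIndex_linearEquiv eQuot).comp
    (h.comp (hasFredholmIndex_linearEquiv eSub.symm))

end FredholmIndex

section OrderFiltration

variable {R : Type*} [Semiring R]

variable (R) in
/-- The decreasing filtration of Laurent series by order: the series of order greater than `k`.
It is phrased through coefficients so that `orderGT ℂ 0` is `tPosPart` definitionally. -/
def orderGT (k : ℤ) : Submodule R (LaurentSeries R) where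
  carrier := {x | ∀ m ≤ k, x.coeff m = 0}
  add_mem' hx hy m hm := by rw [HahnSeries.coeff_add, hx m hm, hy m hm, add_zero]
  zero_mem' _ _ := HahnSeries.coeff_zero
  smul_mem' c x hx m hm := by rw [HahnSeries.coeff_smul, hx m hm, smul_zero]

theorem mem_orderGT_iff_lt_orderTop {k : ℤ} {x : LaurentSeries R} :
    x ∈ orderGT R k ↔ k < x.orderTop := by
  refine ⟨fun hx => ?_, fun hx m hm =>
    HahnSeries.coeff_eq_zero_of_lt_orderTop ((WithTop.coe_le_coe.2 hm).trans_lt hx)⟩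
  by_contra! hle
  obtain ⟨m, hm⟩ := WithTop.ne_top_iff_exists.1 (hle.trans_lt (WithTop.coe_lt_top k)).ne
  exact HahnSeries.coeff_orderTop_ne hm.symm (hx m (WithTop.coe_le_coe.1 (hm ▸ hle)))

variable (R) in
theorem orderGT_antitone : Antitone (orderGT R) :=
  fun _ _ hkl _ hx m hm => hx m (hm.trans hkl)

theorem mul_mem_orderGT_iff [NoZeroDivisors R] {f x : LaurentSeries R} (hf : f ≠ 0) {k : ℤ} :
    f * x ∈ orderGT R (f.order + k) ↔ x ∈ orderGT R k := by
  simp only [mem_orderGT_iff_lt_orderTop, HahnSeries.orderTop_mul, WithTop.coe_add,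
    HahnSeries.order_eq_orderTop_of_ne_zero hf]
  exact WithTop.add_lt_add_iff_left (HahnSeries.orderTop_ne_top.2 hf)

end OrderFiltration

section OrderFiltrationQuotient

variable (R : Type*) [Ring R] (k l : ℤ)

/-- The coefficients in degrees `k < i ≤ l` of a series of order greater than `k`. They identify
the quotient of `orderGT R k` by `orderGT R l` with a finite free module. -/
def coeffsIoc : orderGT R k →ₗ[R] (Finset.Ioc k l → R) :=
  LinearMap.pi fun i => HahnSeries.coeff.linearMap i.1 ∘ₗ (orderGT R k).subtype

theorem ker_coeffsIoc : (coeffsIoc R k l).ker = (orderGT R l).submoduleOf (orderGT R k) := by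
  ext x
  change coeffsIoc R k l x = 0 ↔ x.1 ∈ orderGT R l
  refine ⟨fun hx m hml => ?_, fun hx => funext fun i => hx i (Finset.mem_Ioc.1 i.2).2⟩
  rcases le_or_gt m k with hmk | hkm
  · exact x.2 m hmk
  · exact congrFun hx ⟨m, Finset.mem_Ioc.2 ⟨hkm, hml⟩⟩

theorem coeffsIoc_surjective : Function.Surjective (coeffsIoc R k l) := by
  intro c
  let x := HahnSeries.ofFinsupp (Finsupp.equivFunOnFinite.symm c).extendDomain
  have hx : x ∈ orderGT R k := fun m hm => dif_neg fun hmem => (Finset.mem_Ioc.1 hmem).1.not_ge hm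
  exact ⟨⟨x, hx⟩, funext fun i => dif_pos i.2⟩

/-- The isomorphism induced by `coeffsIoc` on the quotient of two steps of the filtration. -/
def orderGTQuotientEquiv :
    (orderGT R k ⧸ (orderGT R l).submoduleOf (orderGT R k)) ≃ₗ[R] (Finset.Ioc k l → R) :=
  Submodule.quotEquivOfEq _ _ (ker_coeffsIoc R k l).symm ≪≫ₗ
    (coeffsIoc R k l).quotKerEquivOfSurjective (coeffsIoc_surjective R k l)

end OrderFiltrationQuotient

section IndexShift

variable {K : Type*}

theorem hasFredholmIndex_factor_orderGT [DivisionRing K] {k l : ℤ} (hkl : k ≤ l) :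
    HasFredholmIndex (Submodule.factor (orderGT_antitone K hkl)) (l - k) := by
  let e := orderGTQuotientEquiv K k l
  have := Module.Finite.equiv e.symm
  have hdim :
      (Module.finrank K (orderGT K k ⧸ (orderGT K l).submoduleOf (orderGT K k)) : ℤ) = l - k := by
    rw [e.finrank_eq, Module.finrank_fintype_fun_eq_card, Fintype.card_coe, Int.card_Ioc,
      Int.toNat_sub_of_le hkl]
  exact hdim ▸ hasFredholmIndex_factor (orderGT_antitone K hkl)

theorem HasFredholmIndex.projMod_orderGT [DivisionRing K] {W : Submodule K (LaurentSeries K)}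
    {n k : ℤ} (h : HasFredholmIndex (projMod (orderGT K k) W) n) (l : ℤ) :
    HasFredholmIndex (projMod (orderGT K l) W) (n + k - l) := by
  rcases le_total k l with hkl | hlk
  · refine (hasFredholmIndex_factor_orderGT hkl).of_comp ?_
    rw [factor_comp_projMod]
    convert h using 1
    ring
  · have hcomp := (hasFredholmIndex_factor_orderGT hlk).comp h
    rw [factor_comp_projMod] at hcomp
    convert hcomp using 1
    ring

variable [Field K]

-- Instance search fails here because it reaches `HahnSeries.powerSeriesAlgebra`, whose scalar
-- multiplication is not definitionally the coefficientwise one.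
local instance : SMulCommClass K (LaurentSeries K) (LaurentSeries K) :=
  (HahnSeries.instAlgebra : Algebra K (LaurentSeries K)).to_smulCommClass

theorem map_mulLeft_orderGT {f : LaurentSeries K} (hf : f ≠ 0) (k : ℤ) :
    (orderGT K k).map (LinearMap.mulLeft K f) = orderGT K (f.order + k) := by
  ext y
  constructor
  · rintro ⟨x, hx, rfl⟩
    exact (mul_mem_orderGT_iff hf).2 hx
  · intro hy
    refine ⟨f⁻¹ * y, (mul_mem_orderGT_iff hf).1 ?_, mul_inv_cancel_left₀ hf y⟩
    rwa [mul_inv_cancel_left₀ hf]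

theorem mul_by_laurentSeries_shifts_index_general {W : Submodule K (LaurentSeries K)} {k n : ℤ}
    (hW : HasFredholmIndex (projMod (orderGT K k) W) n) {f : LaurentSeries K} (hf : f ≠ 0) :
    HasFredholmIndex (projMod (orderGT K k) (W.map (LinearMap.mulLeft K f))) (n + f.order) := by
  have hmap := (hW.projMod_orderGT (k - f.order)).projMod_map
    ((Units.mk0 f hf).mulLeftLinearEquiv K (LaurentSeries K))
  rw [Units.toLinearMap_mulLeftLinearEquiv, Units.val_mk0, map_mulLeft_orderGT hf,
    add_sub_cancel] at hmap
  convert hmap using 1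
  ring

end IndexShift

theorem hasFredholmIndex_gammaMap_iff {W : Submodule ℂ (LaurentSeries ℂ)} {n : ℤ} :
    HasFredholmIndex (gammaMap W) n ↔ IsFredholm W ∧ ind W = n := by
  have hind : (gammaMap W).index = ind W := LinearMap.index_eq_finrank_sub
  exact ⟨fun h => ⟨⟨h.finite_ker, h.finite_coker⟩, hind ▸ h.index_eq⟩,
    fun h => ⟨h.1.1, h.1.2, hind.trans h.2⟩⟩

theorem order_tpowNeg (m : ℕ) : (tpowNeg m).order = -(m : ℤ) :=
  HahnSeries.order_single one_ne_zero

theorem tpowNeg_ne_zero (m : ℕ) : tpowNeg m ≠ 0 :=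
  HahnSeries.single_ne_zero one_ne_zero

/-- If `γ_W` is Fredholm and `f ≠ 0` is a Laurent series of `t`-adic
order `v`, then `γ_{f·W}` is Fredholm and `ind γ_{f·W} = ind γ_W + v`.
In particular, multiplication by `t^{-n}` lowers the virtual dimension by `n`. -/
theorem mul_by_laurentSeries_shifts_index (W : Submodule ℂ (LaurentSeries ℂ))
    (hW : IsFredholm W) (f : LaurentSeries ℂ) (hf : f ≠ 0) (v : ℤ) (hv : f.order = v) :
    (IsFredholm (W.map (mulBy f)) ∧ ind (W.map (mulBy f)) = ind W + v) ∧
    ∀ m : ℕ, ind (W.map (mulBy (tpowNeg m))) = ind W - m := by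
  have hmul {g : LaurentSeries ℂ} (hg : g ≠ 0) :
      IsFredholm (W.map (mulBy g)) ∧ ind (W.map (mulBy g)) = ind W + g.order :=
    hasFredholmIndex_gammaMap_iff.1 <| mul_by_laurentSeries_shifts_index_general (k := 0)
      (hasFredholmIndex_gammaMap_iff.2 ⟨hW, rfl⟩) hg
  refine ⟨hv ▸ hmul hf, fun m => ?_⟩
  rw [(hmul (tpowNeg_ne_zero m)).2, order_tpowNeg, sub_eq_add_neg]

end
end

section
/- Let W ⊆ W' be ℂ-linear subspaces of ℂ((t)) such that both projections γ_W : W → ℂ((t))/tℂ[[t]] and γ_{W'} : W' → ℂ((t))/tℂ[[t]] are Fredholm. Then the quotient space W'/W is finite-dimensional over ℂ and dim_ℂ(W'/W) = ind(γ_{W'}) − ind(γ_W). -/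
noncomputable section

/-!
If `ι : W → W'` is the inclusion, then `γ_W = γ_{W'} ∘ ι`. The induced map
`W'/W → coker γ_W` has kernel the image of `ker γ_{W'}`, so `W'/W` is finite-dimensional.
Additivity of the index under composition then gives `ind γ_W = ind γ_{W'} + ind ι`, and
`ind ι = -dim (W'/W)` because `ι` is injective with cokernel `W'/W`.
-/

section

open LinearMap Submodule

variable {U V Q : Type*} [AddCommGroup U] [AddCommGroup V] [AddCommGroup Q]

theorem finite_quotient_range_of_comp {R : Type*} [Ring R] [IsNoetherianRing R]
    [Module R U] [Module R V] [Module R Q] (f : U →ₗ[R] V) (g : V →ₗ[R] Q)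
    [Module.Finite R (ker g)] [Module.Finite R (Q ⧸ range (g ∘ₗ f))] :
    Module.Finite R (V ⧸ range f) := by
  have hle : range f ≤ (range (g ∘ₗ f)).comap g := by rw [← map_le_iff_le_comap, range_comp]
  let gbar : (V ⧸ range f) →ₗ[R] Q ⧸ range (g ∘ₗ f) := mapQ _ _ g hle
  have hker : ker gbar = (ker g).map (range f).mkQ := by
    rw [ker_mapQ, range_comp, comap_map_eq, Submodule.map_sup, mkQ_map_self, bot_sup_eq]
  have : Module.Finite R (ker gbar) := by rw [hker]; infer_instance
  have : Module.Finite R ((V ⧸ range f) ⧸ ker gbar) := .equiv gbar.quotKerEquivRange.symm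
  exact .of_submodule_quotient (ker gbar)

variable {K : Type*} [DivisionRing K] [Module K U] [Module K V] [Module K Q]

theorem finrank_quotient_range_eq_index_sub_index_comp {f : U →ₗ[K] V}
    (hf : Function.Injective f) (g : V →ₗ[K] Q)
    [FiniteDimensional K (ker g)] [FiniteDimensional K (Q ⧸ range (g ∘ₗ f))] :
    (Module.finrank K (V ⧸ range f) : ℤ) = g.index - (g ∘ₗ f).index := by
  have : FiniteDimensional K (ker f) := by rw [ker_eq_bot.2 hf]; infer_instance
  have : FiniteDimensional K (V ⧸ range f) := finite_quotient_range_of_comp f g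
  have : FiniteDimensional K (Q ⧸ range g) := CoFG.of_le (range_comp_le_range f g) ‹_›
  rw [index_comp, index_of_injective hf]
  ring

theorem finrank_quotient_eq_ind_sub_ind_general (g : V →ₗ[K] Q) {W W' : Submodule K V}
    (hle : W ≤ W') (hker : FiniteDimensional K (ker (g.domRestrict W')))
    (hcoker : FiniteDimensional K (Q ⧸ range (g.domRestrict W))) :
    FiniteDimensional K (W' ⧸ W.comap W'.subtype) ∧
    (Module.finrank K (W' ⧸ W.comap W'.subtype) : ℤ) =
      (g.domRestrict W').index - (g.domRestrict W).index := by
  have hcomp : g.domRestrict W = g.domRestrict W' ∘ₗ inclusion hle := rfl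
  rw [hcomp] at hcoker ⊢
  rw [← range_inclusion W W' hle]
  exact ⟨finite_quotient_range_of_comp _ (g.domRestrict W'),
    finrank_quotient_range_eq_index_sub_index_comp (inclusion_injective hle) _⟩

end

theorem index_gammaMap (W : Submodule ℂ (LaurentSeries ℂ)) : (gammaMap W).index = ind W :=
  LinearMap.index_eq_finrank_sub

/-- If `W ⊆ W'` and both `γ_W` and `γ_{W'}` are Fredholm, then `W'/W`
is finite-dimensional of dimension `ind γ_{W'} - ind γ_W`. -/
theorem finrank_quotient_eq_ind_sub_ind (W W' : Submodule ℂ (LaurentSeries ℂ))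
    (hle : W ≤ W') (hW : IsFredholm W) (hW' : IsFredholm W') :
    FiniteDimensional ℂ (W' ⧸ W.comap W'.subtype) ∧
    (Module.finrank ℂ (W' ⧸ W.comap W'.subtype) : ℤ) = ind W' - ind W := by
  rw [← index_gammaMap, ← index_gammaMap]
  exact finrank_quotient_eq_ind_sub_ind_general tPosPart.mkQ hle hW'.1 hW.2

end
end

section
/- Let n ≥ 1 and let W be a ℂ-linear subspace of ℂ((t)) such that γ_W : W → ℂ((t))/tℂ[[t]] is Fredholm and t^{-n}·W ⊆ W (i.e., W is a point of the n-reduced Sato Grassmannian GR^{(n)}). Then the quotient W/(t^{-n}·W) is a ℂ-vector space of dimension exactly n. -/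
noncomputable section

/-!
Since multiplication by `t^n` maps `tℂ[[t]]` into itself, it acts on `ℂ((t))/tℂ[[t]]`, where it is
surjective with kernel spanned by the classes of `1, t⁻¹, …, t⁻⁽ⁿ⁻¹⁾`, so it has index `n`. If `m`
denotes multiplication by `t⁻ⁿ` on `W`, then `tⁿ ∘ γ_W ∘ m = γ_W`. Additivity of the index gives
`n + ind γ_W + ind m = ind γ_W`, so `ind m = -n`, and as `m` is injective its cokernel
`W/t⁻ⁿW` has dimension `n`.

The same computation works for any nonzero `f` with `f·W ⊆ W`. If `f` has order `≤ 0`, then `f⁻¹`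
plays the role of `tⁿ`; if it has order `≥ 0`, then `f` itself acts on `ℂ((t))/tℂ[[t]]`, and
comparing indices in `γ_W ∘ m = f ∘ γ_W` gives `dim W/fW = -ord f`, which forces `ord f = 0`.
-/

section Index

open Module

variable {k U V V' : Type*} [DivisionRing k] [AddCommGroup U] [Module k U]
  [AddCommGroup V] [Module k V] [AddCommGroup V'] [Module k V']

theorem finiteDimensional_coker_of_surjective {f : U →ₗ[k] V} (hf : Function.Surjective f) :
    FiniteDimensional k (V ⧸ f.range) := by
  rw [LinearMap.range_eq_top.2 hf]
  exact Submodule.CoFG.top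

variable {f : U →ₗ[k] V} {g : V →ₗ[k] V'} {h : U →ₗ[k] V'}

theorem finiteDimensional_coker_of_comp_eq (hgf : g ∘ₗ f = h)
    [FiniteDimensional k g.ker] [FiniteDimensional k (V' ⧸ h.range)] :
    FiniteDimensional k (V ⧸ f.range) := by
  have hrange : h.range = f.range.map g := hgf ▸ LinearMap.range_comp f g
  let φ : (V ⧸ f.range) →ₗ[k] V' ⧸ h.range :=
    f.range.mapQ h.range g (Submodule.map_le_iff_le_comap.1 hrange.ge)
  have hker : φ.ker = g.ker.map f.range.mkQ := by
    simp [φ, Submodule.ker_mapQ, hrange, Submodule.comap_map_eq]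
  have : FiniteDimensional k φ.ker := by
    rw [hker]
    infer_instance
  have : FiniteDimensional k ((V ⧸ f.range) ⧸ φ.ker) :=
    Module.Finite.equiv φ.quotKerEquivRange.symm
  exact Module.Finite.of_submodule_quotient φ.ker

theorem finrank_coker_of_comp_eq (hf : Function.Injective f) (hgf : g ∘ₗ f = h)
    [FiniteDimensional k g.ker] [FiniteDimensional k (V' ⧸ h.range)] :
    (finrank k (V ⧸ f.range) : ℤ) = g.index - h.index := by
  have : FiniteDimensional k f.ker := by
    rw [LinearMap.ker_eq_bot.2 hf]
    infer_instance
  have : FiniteDimensional k (V ⧸ f.range) := finiteDimensional_coker_of_comp_eq hgf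
  have : FiniteDimensional k (V' ⧸ g.range) :=
    Submodule.CoFG.of_le (hgf ▸ LinearMap.range_comp_le_range f g) ‹_›
  rw [← hgf, LinearMap.index_comp, LinearMap.index_of_injective hf]
  ring

end Index

section Order

variable {Γ R : Type*}

theorem lt_orderTop_iff_forall [LinearOrder Γ] [Zero R] {x : HahnSeries Γ R} {i : Γ} :
    (i : WithTop Γ) < x.orderTop ↔ ∀ j ≤ i, x.coeff j = 0 := by
  refine ⟨fun h j hj ↦ ?_, fun h ↦ ?_⟩
  · exact HahnSeries.coeff_eq_zero_of_lt_orderTop ((WithTop.coe_le_coe.2 hj).trans_lt h)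
  · by_contra! hx
    obtain ⟨j, hj⟩ := WithTop.ne_top_iff_exists.1 (hx.trans_lt (WithTop.coe_lt_top i)).ne
    exact HahnSeries.coeff_orderTop_ne hj.symm (h j (WithTop.coe_le_coe.1 (hj ▸ hx)))

theorem order_inv [AddCommGroup Γ] [LinearOrder Γ] [IsOrderedAddMonoid Γ] [Field R]
    {x : HahnSeries Γ R} (hx : x ≠ 0) : x⁻¹.order = -x.order := by
  rw [eq_neg_iff_add_eq_zero, ← HahnSeries.order_mul (inv_ne_zero hx) hx, inv_mul_cancel₀ hx,
    HahnSeries.order_one]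

theorem orderTop_mul_pos_iff [AddCommGroup Γ] [LinearOrder Γ] [IsOrderedAddMonoid Γ]
    [NonUnitalNonAssocSemiring R] [NoZeroDivisors R] {f : HahnSeries Γ R} (hf : f ≠ 0)
    (x : HahnSeries Γ R) :
    0 < (f * x).orderTop ↔ ((-f.order : Γ) : WithTop Γ) < x.orderTop := by
  rw [HahnSeries.orderTop_mul, ← HahnSeries.order_eq_orderTop_of_ne_zero hf]
  cases x.orderTop with
  | top => simpa using WithTop.coe_lt_top (-f.order)
  | coe a =>
    norm_cast
    exact neg_lt_iff_pos_add'.symm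

theorem exists_coeff_eq_on_finset [PartialOrder Γ] [Zero R] (s : Finset Γ) (v : s → R) :
    ∃ x : HahnSeries Γ R, (∀ i : s, x.coeff i = v i) ∧ ∀ i ∉ s, x.coeff i = 0 :=
  ⟨HahnSeries.ofFinsupp (Finsupp.indicator s fun i hi ↦ v ⟨i, hi⟩),
    fun i ↦ Finsupp.indicator_of_mem i.2 _, fun _ hi ↦ Finsupp.indicator_of_notMem hi _⟩

end Order

theorem mem_tPosPart_iff {x : LaurentSeries ℂ} : x ∈ tPosPart ↔ 0 < x.orderTop :=
  lt_orderTop_iff_forall.symm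

/-- Multiplication by a power series `f` as an endomorphism of `ℂ((t))/tℂ[[t]]`; that `f` lies in
`ℂ[[t]]` is encoded as `0 ≤ f.order`, since `HahnSeries.order` is `0` at `0`. -/
def mulQuot (f : LaurentSeries ℂ) (hf : 0 ≤ f.order) :
    (LaurentSeries ℂ ⧸ tPosPart) →ₗ[ℂ] (LaurentSeries ℂ ⧸ tPosPart) :=
  tPosPart.mapQ tPosPart (mulBy f) fun x hx ↦ by
    change f * x ∈ tPosPart
    rw [mem_tPosPart_iff] at hx ⊢
    rw [HahnSeries.orderTop_mul]
    exact hx.trans_le (le_add_of_nonneg_left (HahnSeries.zero_le_orderTop_iff.2 hf))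

/-- The coefficients in the degrees `-k < m ≤ 0`, which make sense modulo `tℂ[[t]]`. -/
def polarCoeffs (k : ℤ) : (LaurentSeries ℂ ⧸ tPosPart) →ₗ[ℂ] (Finset.Ioc (-k) 0 → ℂ) :=
  tPosPart.liftQ (LinearMap.pi fun m ↦ HahnSeries.coeff.linearMap (m : ℤ)) fun _ hx ↦
    funext fun m ↦ hx m (Finset.mem_Ioc.1 m.2).2

section MulQuot

variable {f : LaurentSeries ℂ}

theorem mulQuot_surjective (hf₀ : f ≠ 0) (hf : 0 ≤ f.order) :
    Function.Surjective (mulQuot f hf) := by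
  intro y
  obtain ⟨x, rfl⟩ := tPosPart.mkQ_surjective y
  exact ⟨tPosPart.mkQ (f⁻¹ * x), congrArg tPosPart.mkQ (mul_inv_cancel_left₀ hf₀ x)⟩

theorem mulQuot_mkQ_eq_zero_iff (hf₀ : f ≠ 0) (hf : 0 ≤ f.order)
    (x : LaurentSeries ℂ) :
    mulQuot f hf (tPosPart.mkQ x) = 0 ↔ ∀ m ≤ -f.order, x.coeff m = 0 := by
  rw [← lt_orderTop_iff_forall, ← orderTop_mul_pos_iff hf₀, ← mem_tPosPart_iff]
  exact Submodule.Quotient.mk_eq_zero _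

theorem polarCoeffs_domRestrict_ker_mulQuot_bijective
    (hf₀ : f ≠ 0) (hf : 0 ≤ f.order) :
    Function.Bijective ((polarCoeffs f.order).domRestrict (mulQuot f hf).ker) := by
  constructor
  · rw [injective_iff_map_eq_zero]
    rintro ⟨y, hy⟩ hpolar
    obtain ⟨x, rfl⟩ := tPosPart.mkQ_surjective y
    have hlow : ∀ m ≤ -f.order, x.coeff m = 0 := (mulQuot_mkQ_eq_zero_iff hf₀ hf x).1 hy
    have hx : x ∈ tPosPart := fun m hm ↦ (le_or_gt m (-f.order)).elim (hlow m) fun hm' ↦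
      congrFun hpolar ⟨m, Finset.mem_Ioc.2 ⟨hm', hm⟩⟩
    exact Subtype.ext ((Submodule.Quotient.mk_eq_zero _).2 hx)
  · intro v
    obtain ⟨x, hxv, hx⟩ := exists_coeff_eq_on_finset _ v
    have hlow : ∀ m ≤ -f.order, x.coeff m = 0 := fun m hm ↦
      hx m fun hm' ↦ hm.not_gt (Finset.mem_Ioc.1 hm').1
    exact ⟨⟨tPosPart.mkQ x, (mulQuot_mkQ_eq_zero_iff hf₀ hf x).2 hlow⟩, funext hxv⟩

theorem finiteDimensional_ker_mulQuot (hf₀ : f ≠ 0) (hf : 0 ≤ f.order) :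
    FiniteDimensional ℂ (mulQuot f hf).ker :=
  Module.Finite.of_injective _ (polarCoeffs_domRestrict_ker_mulQuot_bijective hf₀ hf).1

theorem index_mulQuot (hf₀ : f ≠ 0) (hf : 0 ≤ f.order) :
    (mulQuot f hf).index = f.order := by
  let e := LinearEquiv.ofBijective _ (polarCoeffs_domRestrict_ker_mulQuot_bijective hf₀ hf)
  rw [LinearMap.index_of_surjective (mulQuot_surjective hf₀ hf), e.finrank_eq]
  simp [hf]

end MulQuot

section Subspace

variable (f : LaurentSeries ℂ) (W : Submodule ℂ (LaurentSeries ℂ))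

/-- Multiplication by `f` as an endomorphism of a subspace `W` with `f·W ⊆ W`. -/
def mulOn (hfW : W.map (mulBy f) ≤ W) : W →ₗ[ℂ] W :=
  (mulBy f).restrict fun _ hx ↦ hfW (Submodule.mem_map_of_mem hx)

variable {f W}

theorem mulOn_injective (hf₀ : f ≠ 0) (hfW : W.map (mulBy f) ≤ W) :
    Function.Injective (mulOn f W hfW) := fun _ _ h ↦
  Subtype.ext (mul_right_injective₀ hf₀ (congrArg Subtype.val h))

theorem range_mulOn (hfW : W.map (mulBy f) ≤ W) :
    (mulOn f W hfW).range = (W.map (mulBy f)).comap W.subtype :=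
  LinearMap.range_restrict _ _

theorem gammaMap_comp_mulOn (hf : 0 ≤ f.order) (hfW : W.map (mulBy f) ≤ W) :
    gammaMap W ∘ₗ mulOn f W hfW = mulQuot f hf ∘ₗ gammaMap W :=
  rfl

theorem mulQuot_inv_comp_gammaMap_comp_mulOn (hf₀ : f ≠ 0) (hf : 0 ≤ f⁻¹.order)
    (hfW : W.map (mulBy f) ≤ W) :
    (mulQuot f⁻¹ hf ∘ₗ gammaMap W) ∘ₗ mulOn f W hfW = gammaMap W :=
  LinearMap.ext fun w ↦ congrArg tPosPart.mkQ (inv_mul_cancel_left₀ hf₀ (w : LaurentSeries ℂ))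

theorem finiteDimensional_ker_mulQuot_comp_gammaMap (hf₀ : f ≠ 0) (hf : 0 ≤ f.order)
    [FiniteDimensional ℂ (gammaMap W).ker] :
    FiniteDimensional ℂ (mulQuot f hf ∘ₗ gammaMap W).ker := by
  have := finiteDimensional_ker_mulQuot hf₀ hf
  rw [LinearMap.ker_comp]
  infer_instance

theorem finiteDimensional_coker_mulQuot_comp_gammaMap (hf₀ : f ≠ 0) (hf : 0 ≤ f.order)
    [FiniteDimensional ℂ ((LaurentSeries ℂ ⧸ tPosPart) ⧸ (gammaMap W).range)] :
    FiniteDimensional ℂ ((LaurentSeries ℂ ⧸ tPosPart) ⧸ (mulQuot f hf ∘ₗ gammaMap W).range) := by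
  have := finiteDimensional_coker_of_surjective (mulQuot_surjective hf₀ hf)
  rw [LinearMap.range_comp]
  infer_instance

theorem index_mulQuot_comp_gammaMap (hf₀ : f ≠ 0) (hf : 0 ≤ f.order) (hW : IsFredholm W) :
    (mulQuot f hf ∘ₗ gammaMap W).index = f.order + (gammaMap W).index := by
  obtain ⟨_, _⟩ := hW
  have := finiteDimensional_ker_mulQuot hf₀ hf
  have := finiteDimensional_coker_of_surjective (mulQuot_surjective hf₀ hf)
  rw [LinearMap.index_comp, index_mulQuot hf₀]

end Subspace

theorem finrank_quotient_tpowNeg_smul_general {f : LaurentSeries ℂ} (hf₀ : f ≠ 0)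
    {W : Submodule ℂ (LaurentSeries ℂ)} (hW : IsFredholm W) (hfW : W.map (mulBy f) ≤ W) :
    FiniteDimensional ℂ (W ⧸ (W.map (mulBy f)).comap W.subtype) ∧
    (Module.finrank ℂ (W ⧸ (W.map (mulBy f)).comap W.subtype) : ℤ) = -f.order := by
  have ⟨_, _⟩ := hW
  have hinj := mulOn_injective hf₀ hfW
  rw [← range_mulOn hfW]
  rcases le_total 0 f.order with hf | hf
  · have hcomp := gammaMap_comp_mulOn hf hfW
    have := finiteDimensional_coker_mulQuot_comp_gammaMap (W := W) hf₀ hf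
    refine ⟨finiteDimensional_coker_of_comp_eq hcomp, ?_⟩
    rw [finrank_coker_of_comp_eq hinj hcomp, index_mulQuot_comp_gammaMap hf₀ hf hW]
    ring
  · have hinv₀ : f⁻¹ ≠ 0 := inv_ne_zero hf₀
    have hinv : 0 ≤ f⁻¹.order := order_inv hf₀ ▸ neg_nonneg.2 hf
    have hcomp := mulQuot_inv_comp_gammaMap_comp_mulOn hf₀ hinv hfW
    have := finiteDimensional_ker_mulQuot_comp_gammaMap (W := W) hinv₀ hinv
    refine ⟨finiteDimensional_coker_of_comp_eq hcomp, ?_⟩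
    rw [finrank_coker_of_comp_eq hinj hcomp, index_mulQuot_comp_gammaMap hinv₀ hinv hW,
      order_inv hf₀]
    ring

/-- If `W` is a point of the `n`-reduced Sato Grassmannian `GR⁽ⁿ⁾`
(`γ_W` Fredholm and `t^{-n}·W ⊆ W`, `n ≥ 1`), then `W/(t^{-n}·W)` has dimension `n`. -/
theorem finrank_quotient_tpowNeg_smul (n : ℕ) (hn : 1 ≤ n)
    (W : Submodule ℂ (LaurentSeries ℂ)) (hW : IsFredholm W)
    (hsub : W.map (mulBy (tpowNeg n)) ≤ W) :
    FiniteDimensional ℂ (W ⧸ (W.map (mulBy (tpowNeg n))).comap W.subtype) ∧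
    Module.finrank ℂ (W ⧸ (W.map (mulBy (tpowNeg n))).comap W.subtype) = n := by
  have horder : (tpowNeg n).order = -n := HahnSeries.order_single one_ne_zero
  have hne : tpowNeg n ≠ 0 := HahnSeries.single_ne_zero one_ne_zero
  simpa [horder] using finrank_quotient_tpowNeg_smul_general hne hW hsub

end
end

section
/- Let n ≥ 1 and let W ⊆ ℂ((t)) be a ℂ-subspace with γ_W : W → ℂ((t))/tℂ[[t]] Fredholm of index 0 and t^{-n}·W ⊆ W. Then the assignment (W_0,…,W_n) ↦ (W_1/W_0 ⊆ W_2/W_0 ⊆ ⋯ ⊆ W_n/W_0) is a bijection between the set of chains W_0 ⊆ W_1 ⊆ ⋯ ⊆ W_n of ℂ-subspaces of ℂ((t)) with W_n = W, W_0 = t^{-n}·W, and each γ_{W_i} Fredholm of index i − n, and the set of complete flags 0 = V_0 ⊂ V_1 ⊂ ⋯ ⊂ V_n of the n-dimensional ℂ-vector space W/(t^{-n}·W) with dim_ℂ V_i = i. In other words, the fiber of the natural fibration FL^{(n)} → GR^{(n)} over W is the full flag variety of W/t^{-n}W. -/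
noncomputable section

/-- Extra shortcut instance: quotients of submodules of `ℂ((t))`. -/
instance (W : Submodule ℂ (LaurentSeries ℂ)) (U : Submodule ℂ W) :
    AddCommGroup (W ⧸ U) := inferInstance

/-- Extra shortcut instance: quotients of submodules of `ℂ((t))`. -/
instance (W : Submodule ℂ (LaurentSeries ℂ)) (U : Submodule ℂ W) :
    Module ℂ (W ⧸ U) := inferInstance

/-! For `A ≤ B` the restriction of a linear map `f` to `A` is its restriction to `B` composed with
the inclusion `A → B`, which is Fredholm of index `-dim (B / A)` as soon as `B / A` is
finite-dimensional. Additivity of the index thus turns the index conditions on a chain between `A`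
and `W` into the dimension conditions on the flag of the quotients `C i / A`, and the correspondence
theorem for submodules of `W / A` does the rest. -/

open Module Submodule

section Fredholm

variable {K M N P : Type*} [DivisionRing K] [AddCommGroup M] [Module K M] [AddCommGroup N]
  [Module K N] [AddCommGroup P] [Module K P]

/-- A linear map is Fredholm, in the purely algebraic sense, if its kernel and cokernel are
finite-dimensional. Its index is `LinearMap.index`. -/
def IsFredholmMap (f : M →ₗ[K] N) : Prop :=
  FiniteDimensional K f.ker ∧ FiniteDimensional K (N ⧸ f.range)

namespace IsFredholmMap

theorem comp {f : M →ₗ[K] N} {g : N →ₗ[K] P} (hg : IsFredholmMap g) (hf : IsFredholmMap f) :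
    IsFredholmMap (g ∘ₗ f) := by
  obtain ⟨_, _⟩ := hf
  obtain ⟨_, _⟩ := hg
  constructor
  · rw [LinearMap.ker_comp]
    infer_instance
  · rw [LinearMap.range_comp]
    infer_instance

theorem of_comp {f : M →ₗ[K] N} {g : N →ₗ[K] P} (hgf : IsFredholmMap (g ∘ₗ f))
    (hg : IsFredholmMap g) : IsFredholmMap f := by
  obtain ⟨_, _⟩ := hgf
  obtain ⟨_, _⟩ := hg
  have hrange : f.range ≤ (g ∘ₗ f).range.comap g := by
    rw [← map_le_iff_le_comap, LinearMap.range_comp]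
  let cokerMap := f.range.mapQ (g ∘ₗ f).range g hrange
  have hker : cokerMap.ker = g.ker.map f.range.mkQ := by
    rw [ker_mapQ, LinearMap.range_comp, comap_map_eq, Submodule.map_sup, mkQ_map_self, bot_sup_eq]
  have : FiniteDimensional K cokerMap.ker := by
    rw [hker]
    infer_instance
  have : cokerMap.ker.CoFG := CoFG.ker cokerMap
  exact ⟨finiteDimensional_of_le (LinearMap.ker_le_ker_comp f g),
    Finite.of_submodule_quotient cokerMap.ker⟩

theorem index_comp {f : M →ₗ[K] N} {g : N →ₗ[K] P} (hg : IsFredholmMap g)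
    (hf : IsFredholmMap f) : (g ∘ₗ f).index = g.index + f.index :=
  have := hf.1
  have := hf.2
  have := hg.1
  have := hg.2
  LinearMap.index_comp g

end IsFredholmMap

theorem isFredholmMap_inclusion_iff {A B : Submodule K M} (hAB : A ≤ B) :
    IsFredholmMap (inclusion hAB) ↔ FiniteDimensional K (B ⧸ A.comap B.subtype) := by
  rw [IsFredholmMap, ker_inclusion, range_inclusion]
  exact and_iff_right inferInstance

theorem index_inclusion {A B : Submodule K M} (hAB : A ≤ B) :
    (inclusion hAB).index = -(finrank K (B ⧸ A.comap B.subtype) : ℤ) := by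
  rw [LinearMap.index_of_injective (inclusion_injective hAB), range_inclusion]

theorem domRestrict_comp_inclusion (f : M →ₗ[K] N) {A B : Submodule K M} (hAB : A ≤ B) :
    f.domRestrict B ∘ₗ inclusion hAB = f.domRestrict A :=
  rfl

variable {f : M →ₗ[K] N} {A B : Submodule K M}

theorem IsFredholmMap.domRestrict_of_le (hB : IsFredholmMap (f.domRestrict B)) (hAB : A ≤ B)
    [FiniteDimensional K (B ⧸ A.comap B.subtype)] : IsFredholmMap (f.domRestrict A) :=
  domRestrict_comp_inclusion f hAB ▸ hB.comp ((isFredholmMap_inclusion_iff hAB).2 inferInstance)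

theorem IsFredholmMap.index_domRestrict_eq_add (hA : IsFredholmMap (f.domRestrict A))
    (hB : IsFredholmMap (f.domRestrict B)) (hAB : A ≤ B) :
    (f.domRestrict B).index =
      (f.domRestrict A).index + finrank K (B ⧸ A.comap B.subtype) := by
  rw [← domRestrict_comp_inclusion f hAB] at hA ⊢
  rw [hB.index_comp (hA.of_comp hB), index_inclusion, neg_add_cancel_right]

end Fredholm

section Subquotient

variable {R M : Type*} [Ring R] [AddCommGroup M] [Module R M] {A C W : Submodule R M}

/-- The subspace `C / A` of `W / A`, for `A ≤ C ≤ W`. Since `A` is not a submodule of `↥W`, the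
quotient `W / A` is encoded as `W ⧸ A.comap W.subtype`. -/
def subquotient (A W C : Submodule R M) : Submodule R (W ⧸ A.comap W.subtype) :=
  (C.comap W.subtype).map (A.comap W.subtype).mkQ

/-- The preimage in `W`, as a submodule of `M`, of a submodule of `W / A`: the inverse of
`subquotient A W` in the correspondence theorem. -/
def subquotientPreimage (A W : Submodule R M) (V : Submodule R (W ⧸ A.comap W.subtype)) :
    Submodule R M :=
  (V.comap (A.comap W.subtype).mkQ).map W.subtype

theorem subquotient_mono (A W : Submodule R M) : Monotone (subquotient A W) :=
  fun _ _ h => map_mono (comap_mono h)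

theorem subquotientPreimage_mono (A W : Submodule R M) : Monotone (subquotientPreimage A W) :=
  fun _ _ h => map_mono (comap_mono h)

theorem subquotientPreimage_le (A W : Submodule R M) (V : Submodule R (W ⧸ A.comap W.subtype)) :
    subquotientPreimage A W V ≤ W :=
  map_subtype_le W _

@[simp]
theorem subquotient_subquotientPreimage (A W : Submodule R M)
    (V : Submodule R (W ⧸ A.comap W.subtype)) :
    subquotient A W (subquotientPreimage A W V) = V := by
  rw [subquotient, subquotientPreimage, comap_map_eq_of_injective W.injective_subtype,
    map_comap_eq_of_surjective (mkQ_surjective _)]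

theorem subquotientPreimage_subquotient (hAC : A ≤ C) (hCW : C ≤ W) :
    subquotientPreimage A W (subquotient A W C) = C := by
  rw [subquotientPreimage, subquotient, comap_map_mkQ, sup_eq_right.2 (comap_mono hAC),
    map_comap_subtype, inf_eq_right.2 hCW]

@[simp]
theorem subquotient_self_left (A W : Submodule R M) : subquotient A W A = ⊥ :=
  mkQ_map_self _

@[simp]
theorem subquotient_self_right (A W : Submodule R M) : subquotient A W W = ⊤ := by
  rw [subquotient, comap_subtype_self, Submodule.map_top, range_mkQ]

theorem subquotientPreimage_bot (hAW : A ≤ W) : subquotientPreimage A W ⊥ = A := by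
  rw [← subquotient_self_left, subquotientPreimage_subquotient le_rfl hAW]

theorem subquotientPreimage_top (hAW : A ≤ W) : subquotientPreimage A W ⊤ = W := by
  rw [← subquotient_self_right, subquotientPreimage_subquotient hAW le_rfl]

theorem finrank_subquotient (A : Submodule R M) (hCW : C ≤ W) :
    finrank R (subquotient A W C) = finrank R (C ⧸ A.comap C.subtype) := by
  let toQuotient : C →ₗ[R] W ⧸ A.comap W.subtype := (A.comap W.subtype).mkQ ∘ₗ inclusion hCW
  have hker : toQuotient.ker = A.comap C.subtype := by
    rw [LinearMap.ker_comp, ker_mkQ, ← comap_comp, subtype_comp_inclusion]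
  have hrange : toQuotient.range = subquotient A W C := by
    rw [LinearMap.range_comp, range_inclusion, subquotient]
  rw [← hker, ← hrange]
  exact toQuotient.quotKerEquivRange.finrank_eq.symm

end Subquotient

section CompleteFlags

variable {K U : Type*} [DivisionRing K] [AddCommGroup U] [Module K U] {n : ℕ}

variable (K U n) in
/-- The set of complete flags `0 = V 0 ≤ ⋯ ≤ V n = U` with `dim (V i) = i`. It is empty unless `U`
is of dimension `n`. -/
def completeFlags : Set (Fin (n + 1) → Submodule K U) :=
  {V | V 0 = ⊥ ∧ V (Fin.last n) = ⊤ ∧ Monotone V ∧ ∀ i : Fin (n + 1), finrank K (V i) = i}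

theorem finrank_of_mem_completeFlags {V : Fin (n + 1) → Submodule K U}
    (hV : V ∈ completeFlags K U n) : finrank K U = n := by
  obtain ⟨-, htop, -, hdim⟩ := hV
  rw [← finrank_top K U, ← htop, hdim, Fin.val_last]

theorem finiteDimensional_of_mem_completeFlags {V : Fin (n + 1) → Submodule K U}
    (hV : V ∈ completeFlags K U n) : FiniteDimensional K U := by
  obtain rfl | hn := n.eq_zero_or_pos
  -- `finrank K U = 0` would not exclude infinite dimension; but here `⊥ = V 0 = ⊤`.
  · have : Subsingleton U := (Submodule.subsingleton_iff K).1 <|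
      subsingleton_of_bot_eq_top (hV.1.symm.trans hV.2.1)
    infer_instance
  · exact finite_of_finrank_pos (hn.trans_eq (finrank_of_mem_completeFlags hV).symm)

end CompleteFlags

section FredholmChains

variable {K M N : Type*} [DivisionRing K] [AddCommGroup M] [Module K M] [AddCommGroup N]
  [Module K N] {f : M →ₗ[K] N} {A C W : Submodule K M} {n : ℕ}

/-- The set of chains `A = C 0 ≤ ⋯ ≤ C n = W` on whose members `f` restricts to Fredholm maps, the
index growing by one at each step. -/
def fredholmChains (f : M →ₗ[K] N) (A W : Submodule K M) (n : ℕ) :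
    Set (Fin (n + 1) → Submodule K M) :=
  {C | C 0 = A ∧ C (Fin.last n) = W ∧ Monotone C ∧
    ∀ i : Fin (n + 1), IsFredholmMap (f.domRestrict (C i)) ∧
      (f.domRestrict (C i)).index = (f.domRestrict W).index + (((i : ℕ) : ℤ) - n)}

theorem left_le_of_mem_fredholmChains {C : Fin (n + 1) → Submodule K M}
    (hC : C ∈ fredholmChains f A W n) (i : Fin (n + 1)) : A ≤ C i :=
  hC.1.symm.trans_le (hC.2.2.1 (Fin.zero_le i))

theorem le_right_of_mem_fredholmChains {C : Fin (n + 1) → Submodule K M}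
    (hC : C ∈ fredholmChains f A W n) (i : Fin (n + 1)) : C i ≤ W :=
  (hC.2.2.1 (Fin.le_last i)).trans_eq hC.2.1

theorem IsFredholmMap.index_domRestrict_eq_add_finrank_subquotient
    (hA : IsFredholmMap (f.domRestrict A)) (hC : IsFredholmMap (f.domRestrict C)) (hAC : A ≤ C)
    (hCW : C ≤ W) :
    (f.domRestrict C).index = (f.domRestrict A).index + finrank K (subquotient A W C) := by
  rw [finrank_subquotient A hCW, hA.index_domRestrict_eq_add hC hAC]

theorem mapsTo_subquotient_fredholmChains (f : M →ₗ[K] N) (A W : Submodule K M) (n : ℕ) :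
    Set.MapsTo (fun C i => subquotient A W (C i)) (fredholmChains f A W n)
      (completeFlags K (W ⧸ A.comap W.subtype) n) := by
  intro C hC
  have hAC := left_le_of_mem_fredholmChains hC
  have hCW := le_right_of_mem_fredholmChains hC
  obtain ⟨rfl, rfl, hmono, hfred⟩ := hC
  refine ⟨subquotient_self_left _ _, subquotient_self_right _ _,
    (subquotient_mono _ _).comp hmono, fun i => ?_⟩
  have hindex := (hfred 0).1.index_domRestrict_eq_add_finrank_subquotient (hfred i).1 (hAC i)
    (hCW i)
  rw [(hfred i).2, (hfred 0).2, Fin.val_zero] at hindex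
  lia

theorem mapsTo_subquotientPreimage_completeFlags (hAW : A ≤ W)
    (hW : IsFredholmMap (f.domRestrict W)) (n : ℕ) :
    Set.MapsTo (fun V i => subquotientPreimage A W (V i))
      (completeFlags K (W ⧸ A.comap W.subtype) n) (fredholmChains f A W n) := by
  intro V hV
  have := finiteDimensional_of_mem_completeFlags hV
  have hA : IsFredholmMap (f.domRestrict A) := hW.domRestrict_of_le hAW
  have hindexW := hA.index_domRestrict_eq_add hW hAW
  rw [finrank_of_mem_completeFlags hV] at hindexW
  obtain ⟨hbot, htop, hmono, hdim⟩ := hV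
  refine ⟨(congrArg _ hbot).trans (subquotientPreimage_bot hAW),
    (congrArg _ htop).trans (subquotientPreimage_top hAW),
    (subquotientPreimage_mono A W).comp hmono, fun i => ?_⟩
  have hCW : subquotientPreimage A W (V i) ≤ W := subquotientPreimage_le A W (V i)
  have hAC : A ≤ subquotientPreimage A W (V i) :=
    (subquotientPreimage_bot hAW).symm.trans_le (subquotientPreimage_mono A W bot_le)
  have : ((subquotientPreimage A W (V i)).comap W.subtype).CoFG :=
    CoFG.of_le (comap_mono hAC) inferInstance
  have hC : IsFredholmMap (f.domRestrict (subquotientPreimage A W (V i))) :=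
    hW.domRestrict_of_le hCW
  have hindexC := hA.index_domRestrict_eq_add_finrank_subquotient hC hAC hCW
  rw [subquotient_subquotientPreimage, hdim] at hindexC
  exact ⟨hC, by lia⟩

theorem affine_flag_fiber_is_full_flag_variety_general (hAW : A ≤ W)
    (hW : IsFredholmMap (f.domRestrict W)) (n : ℕ) :
    Set.BijOn (fun C i => subquotient A W (C i)) (fredholmChains f A W n)
      (completeFlags K (W ⧸ A.comap W.subtype) n) := by
  refine Set.InvOn.bijOn (f' := fun V i => subquotientPreimage A W (V i)) ⟨?_, ?_⟩
    (mapsTo_subquotient_fredholmChains f A W n) (mapsTo_subquotientPreimage_completeFlags hAW hW n)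
  · exact fun C hC => funext fun i => subquotientPreimage_subquotient
      (left_le_of_mem_fredholmChains hC i) (le_right_of_mem_fredholmChains hC i)
  · exact fun V _ => funext fun i => subquotient_subquotientPreimage A W (V i)

end FredholmChains

theorem ind_eq_index_domRestrict (W : Submodule ℂ (LaurentSeries ℂ)) :
    ind W = (tPosPart.mkQ.domRestrict W).index :=
  LinearMap.index_eq_finrank_sub.symm

theorem isFredholm_iff_isFredholmMap_domRestrict (W : Submodule ℂ (LaurentSeries ℂ)) :
    IsFredholm W ↔ IsFredholmMap (tPosPart.mkQ.domRestrict W) :=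
  Iff.rfl

/-- For `W ∈ GR⁽ⁿ⁾` with `ind γ_W = 0`, the assignment
`(W_0,…,W_n) ↦ (W_1/W_0 ⊆ ⋯ ⊆ W_n/W_0)` is a bijection from the set of chains
`t^{-n}W = W_0 ⊆ ⋯ ⊆ W_n = W` with each `γ_{W_i}` Fredholm of index `i - n`, onto the
set of complete flags of the `n`-dimensional space `W/(t^{-n}W)`: the fiber of
`FL⁽ⁿ⁾ → GR⁽ⁿ⁾` over `W` is the full flag variety of `W/t^{-n}W`. -/
theorem affine_flag_fiber_is_full_flag_variety (n : ℕ) (hn : 1 ≤ n)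
    (W : Submodule ℂ (LaurentSeries ℂ)) (hW : IsFredholm W) (hind : ind W = 0)
    (hsub : W.map (mulBy (tpowNeg n)) ≤ W) :
    Set.BijOn
      (fun (C : Fin (n + 1) → Submodule ℂ (LaurentSeries ℂ)) (i : Fin (n + 1)) =>
        Submodule.map ((W.map (mulBy (tpowNeg n))).comap W.subtype).mkQ
          ((C i).comap W.subtype))
      {C | C 0 = W.map (mulBy (tpowNeg n)) ∧ C (Fin.last n) = W ∧ Monotone C ∧
        ∀ i, IsFredholm (C i) ∧ ind (C i) = ((i : ℕ) : ℤ) - (n : ℤ)}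
      {V : Fin (n + 1) →
          Submodule ℂ (W ⧸ (W.map (mulBy (tpowNeg n))).comap W.subtype) |
        V 0 = ⊥ ∧ V (Fin.last n) = ⊤ ∧ Monotone V ∧
        ∀ i : Fin (n + 1), Module.finrank ℂ (V i) = i} := by
  have hbij := affine_flag_fiber_is_full_flag_variety_general hsub
    ((isFredholm_iff_isFredholmMap_domRestrict W).1 hW) n
  simpa only [fredholmChains, completeFlags, subquotient, ← ind_eq_index_domRestrict,
    ← isFredholm_iff_isFredholmMap_domRestrict, hind, zero_add] using hbij

end
end
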